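/- arXiv:2305.13027 — 2 statements merged into one kernel-verified Lean document; each statement's English description precedes it below -/
import Mathlib

section
/- Let x : Fin 11 → ℝ^10 be a regular 11-simplex and let C2 be a clique of order 10 in the graph on Y1. Then the set Z = {u ∈ Y : ⟨u, w⟩ ∈ {α1, α2, α3} for every w ∈ C2} has exactly 90 elements. -/
open RealInnerProductSpace

noncomputable section

/-- The three admissible inner product values (angles). -/
def α1 : ℝ := 4/15
def α2 : ℝ := -1/10
def α3 : ℝ := -7/15

/-- A regular 11-simplex in ℝ^10: eleven unit vectors with pairwise inner
products equal to -1/10. -/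
def IsRegularSimplex (x : Fin 11 → EuclideanSpace ℝ (Fin 10)) : Prop :=
  (∀ i, ‖x i‖ = 1) ∧ ∀ i j : Fin 11, i ≠ j → ⟪x i, x j⟫ = -1/10

/-- The set `Y1`: unit vectors `y` with `⟪x 0, y⟫ = α2` such that among the
indices `i ≠ 0`, exactly six satisfy `⟪x i, y⟫ = α1`, exactly one satisfies
`⟪x i, y⟫ = α2`, and exactly three satisfy `⟪x i, y⟫ = α3`. -/
def Y1set (x : Fin 11 → EuclideanSpace ℝ (Fin 10)) : Set (EuclideanSpace ℝ (Fin 10)) :=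
  {y | ‖y‖ = 1 ∧ ⟪x 0, y⟫ = α2 ∧
    {i : Fin 11 | i ≠ 0 ∧ ⟪x i, y⟫ = α1}.ncard = 6 ∧
    {i : Fin 11 | i ≠ 0 ∧ ⟪x i, y⟫ = α2}.ncard = 1 ∧
    {i : Fin 11 | i ≠ 0 ∧ ⟪x i, y⟫ = α3}.ncard = 3}

/-- A clique of order 10 in the graph on `Y1` in which two distinct vectors are
adjacent iff their inner product equals `α2`. -/
def IsClique10 (x : Fin 11 → EuclideanSpace ℝ (Fin 10))
    (D : Set (EuclideanSpace ℝ (Fin 10))) : Prop :=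
  D ⊆ Y1set x ∧ D.ncard = 10 ∧
    ∀ y ∈ D, ∀ y' ∈ D, y ≠ y' → ⟪y, y'⟫ = α2

/-- The set `Y`: unit vectors `u ∉ C2` whose inner products with
`x 0, …, x 10` take the value `α1` exactly six times, `α2` exactly twice, and
`α3` exactly three times. -/
def Yset (x : Fin 11 → EuclideanSpace ℝ (Fin 10))
    (C2 : Set (EuclideanSpace ℝ (Fin 10))) : Set (EuclideanSpace ℝ (Fin 10)) :=
  {u | ‖u‖ = 1 ∧ u ∉ C2 ∧
    {i : Fin 11 | ⟪x i, u⟫ = α1}.ncard = 6 ∧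
    {i : Fin 11 | ⟪x i, u⟫ = α2}.ncard = 2 ∧
    {i : Fin 11 | ⟪x i, u⟫ = α3}.ncard = 3}

/-- The set `Z`: vectors of `Y` whose inner products with all vectors of `C2`
lie in `{α1, α2, α3}`. -/
def Zset (x : Fin 11 → EuclideanSpace ℝ (Fin 10))
    (C2 : Set (EuclideanSpace ℝ (Fin 10))) : Set (EuclideanSpace ℝ (Fin 10)) :=
  {u ∈ Yset x C2 | ∀ w ∈ C2, ⟪u, w⟫ ∈ ({α1, α2, α3} : Set ℝ)}

/-- The list of neighbours of each vertex of the Petersen graph. -/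
def petersenNeighbors : Fin 10 → List (Fin 10) :=
  ![[1, 2, 3], [0, 4, 5], [0, 6, 7], [0, 8, 9], [1, 6, 8], [1, 7, 9], [2, 4, 9], [2, 5, 8],
    [3, 4, 7], [3, 5, 6]]

/-- The Petersen graph. -/
def petersenGraph : SimpleGraph (Fin 10) where
  Adj i j := j ∈ petersenNeighbors i
  symm := ⟨by decide⟩
  loopless := ⟨by decide⟩

namespace SimpleGraph.IsSRGWith

variable {V : Type*} [Fintype V] {G : SimpleGraph V} [DecidableRel G.Adj]

/-- In a strongly regular graph with `ℓ = 0` and `μ = 1`, two distinct vertices have at most one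
common neighbour. -/
lemma eq_of_common_neighbor {n k : ℕ} (h : G.IsSRGWith n k 0 1) {u v w w' : V} (huv : u ≠ v)
    (hu : G.Adj u w) (hv : G.Adj v w) (hu' : G.Adj u w') (hv' : G.Adj v w') : w = w' := by
  have hcard : Fintype.card (G.commonNeighbors u v) ≤ 1 := by
    by_cases huv' : G.Adj u v
    · exact (h.of_adj u v huv').le.trans zero_le_one
    · exact (h.of_not_adj huv huv').le
  exact congrArg Subtype.val <| (Fintype.card_le_one_iff_subsingleton.1 hcard).elim
    ⟨w, hu, hv⟩ ⟨w', hu', hv'⟩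

/-- A strongly regular graph with `ℓ = 0` has no triangles. -/
lemma not_triangle {n k μ : ℕ} (h : G.IsSRGWith n k 0 μ) {u v w : V} (huv : G.Adj u v)
    (huw : G.Adj u w) : ¬ G.Adj v w := fun hvw =>
  (Fintype.card_eq_zero_iff.1 (h.of_adj u v huv)).false ⟨w, huw, hvw⟩

/-- In a strongly regular graph with `μ = 1`, distinct non-adjacent vertices have a common
neighbour. -/
lemma exists_common_neighbor {n k l : ℕ} (h : G.IsSRGWith n k l 1) {u v : V} (huv : u ≠ v)
    (hadj : ¬ G.Adj u v) : ∃ w, G.Adj u w ∧ G.Adj v w := by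
  obtain ⟨⟨w, hw⟩, -⟩ := Fintype.card_eq_one_iff.1 (h.of_not_adj huv hadj)
  exact ⟨w, hw⟩

/-- The two further neighbours of an end of an edge in a cubic graph. -/
lemma exists_other_neighbors {n l μ : ℕ} (h : G.IsSRGWith n 3 l μ) {u v : V} (huv : G.Adj u v) :
    ∃ w w', ∀ z, G.Adj u z ↔ z = v ∨ z = w ∨ z = w' := by
  classical
  have hcard : ((G.neighborFinset u).erase v).card = 2 := by
    rw [Finset.card_erase_of_mem (by simpa using huv), G.card_neighborFinset_eq_degree,
      h.regular u]
  obtain ⟨w, w', -, hw⟩ := Finset.card_eq_two.1 hcard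
  refine ⟨w, w', fun z => ?_⟩
  have := congrArg (z ∈ ·) hw
  simp only [Finset.mem_erase, mem_neighborFinset, Finset.mem_insert, Finset.mem_singleton,
    eq_iff_iff] at this
  by_cases hz : z = v
  · simp [hz, huv]
  · simpa [hz] using this

/-- The vertices at distance at most two from a vertex `o` are pairwise distinct. -/
lemma nodup_of_neighbors (h : G.IsSRGWith 10 3 0 1) {o a₁ a₂ a₃ b₁ b₂ c₁ c₂ d₁ d₂ : V}
    (ho : ∀ z, G.Adj o z ↔ z = a₁ ∨ z = a₂ ∨ z = a₃)
    (hb : ∀ z, G.Adj a₁ z ↔ z = o ∨ z = b₁ ∨ z = b₂)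
    (hc : ∀ z, G.Adj a₂ z ↔ z = o ∨ z = c₁ ∨ z = c₂)
    (hd : ∀ z, G.Adj a₃ z ↔ z = o ∨ z = d₁ ∨ z = d₂) :
    [o, a₁, a₂, a₃, b₁, b₂, c₁, c₂, d₁, d₂].Nodup := by
  set l := [o, a₁, a₂, a₃, b₁, b₂, c₁, c₂, d₁, d₂] with hl
  have hsurj : Function.Surjective (l.get : Fin 10 → V) := fun z => by
    refine List.mem_iff_get.1 ?_
    by_cases hz : o = z
    · simp [hl, hz]
    by_cases hoz : G.Adj o z
    · rcases (ho z).1 hoz with rfl | rfl | rfl <;> simp [hl]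
    obtain ⟨w, how, hzw⟩ := h.exists_common_neighbor hz hoz
    rcases (ho w).1 how with rfl | rfl | rfl
    · rcases (hb z).1 hzw.symm with rfl | rfl | rfl <;> simp [hl]
    · rcases (hc z).1 hzw.symm with rfl | rfl | rfl <;> simp [hl]
    · rcases (hd z).1 hzw.symm with rfl | rfl | rfl <;> simp [hl]
  exact List.nodup_iff_injective_get.2 ((Fintype.bijective_iff_surjective_and_card _).2
    ⟨hsurj, by rw [h.card, Fintype.card_fin, hl]; rfl⟩).1

/-- An enumeration of the vertices of a cubic graph on ten vertices which preserves the adjacency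
of the Petersen graph is an isomorphism. -/
lemma nonempty_iso_of_forall_adj (h : G.IsSRGWith 10 3 0 1) {f : Fin 10 → V}
    (hf : f.Injective) (hadj : ∀ i j, petersenGraph.Adj i j → G.Adj (f i) (f j)) :
    Nonempty (petersenGraph ≃g G) := by
  classical
  have hbij : f.Bijective :=
    (Fintype.bijective_iff_injective_and_card f).2 ⟨hf, by rw [h.card, Fintype.card_fin]⟩
  refine ⟨⟨Equiv.ofBijective f hbij, fun {i j} => ⟨fun hij => ?_, hadj i j⟩⟩⟩
  have hcard : (petersenNeighbors i).toFinset.card = 3 := by clear hij; decide +revert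
  have hsub : (petersenNeighbors i).toFinset.image f ⊆ G.neighborFinset (f i) := by
    intro z hz
    obtain ⟨k, hk, rfl⟩ := Finset.mem_image.1 hz
    exact (G.mem_neighborFinset _ _).2 (hadj i k (List.mem_toFinset.1 hk))
  have heq := Finset.eq_of_subset_of_card_le hsub (by
    rw [Finset.card_image_of_injective _ hf, hcard, G.card_neighborFinset_eq_degree,
      h.regular (f i)])
  have hmem : f j ∈ G.neighborFinset (f i) := (G.mem_neighborFinset _ _).2 hij
  rw [← heq, hf.mem_finset_image, List.mem_toFinset] at hmem
  exact hmem

/-- A strongly regular graph with parameters `(10, 3, 0, 1)` is the Petersen graph. -/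
theorem nonempty_petersenGraph_iso (h : G.IsSRGWith 10 3 0 1) :
    Nonempty (petersenGraph ≃g G) := by
  obtain ⟨o⟩ : Nonempty V := Fintype.card_pos_iff.1 (by rw [h.card]; norm_num)
  obtain ⟨a₁, ha₁⟩ : ∃ a, G.Adj o a :=
    (G.degree_pos_iff_exists_adj o).1 (by rw [h.regular o]; norm_num)
  obtain ⟨a₂, a₃, ho⟩ := h.exists_other_neighbors ha₁
  have ha₂ : G.Adj o a₂ := (ho _).2 (by simp)
  have ha₃ : G.Adj o a₃ := (ho _).2 (by simp)
  obtain ⟨b₁, b₂, hb⟩ := h.exists_other_neighbors ha₁.symm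
  obtain ⟨c₁, c₂, hc⟩ := h.exists_other_neighbors ha₂.symm
  obtain ⟨d₁, d₂, hd⟩ := h.exists_other_neighbors ha₃.symm
  have adj_or {u a z z' : V} (hu : u ≠ a) (hua : ¬ G.Adj a u) (hou : ¬ G.Adj o u)
      (hz : ∀ w, G.Adj a w ↔ w = o ∨ w = z ∨ w = z') : G.Adj u z ∨ G.Adj u z' := by
    obtain ⟨w, huw, haw⟩ := h.exists_common_neighbor hu (fun h' => hua h'.symm)
    rcases (hz w).1 haw with rfl | rfl | rfl
    · exact absurd huw.symm hou
    · exact .inl huw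
    · exact .inr huw
  have distinct {c₁ c₂ d₁ d₂ : V} (hc : ∀ z, G.Adj a₂ z ↔ z = o ∨ z = c₁ ∨ z = c₂)
      (hd : ∀ z, G.Adj a₃ z ↔ z = o ∨ z = d₁ ∨ z = d₂) :=
    h.nodup_of_neighbors ho hb hc hd
  simp only [List.nodup_cons, List.mem_cons, List.not_mem_nil, or_false, not_or, not_false_eq_true,
    List.nodup_nil, and_true] at distinct
  wlog hbc : G.Adj b₁ c₁ generalizing c₁ c₂
  · have hne := distinct hc hd
    refine this c₂ c₁ (fun z => (hc z).trans (by rw [or_comm (a := z = c₁)]))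
      ((adj_or ?_ ?_ ?_ hc).resolve_left hbc) <;>
      simp only [ne_eq, ho, hc] <;> clear * - hne <;> grind
  wlog hbd : G.Adj b₁ d₁ generalizing d₁ d₂
  · have hne := distinct hc hd
    refine this d₂ d₁ (fun z => (hd z).trans (by rw [or_comm (a := z = d₁)]))
      ((adj_or ?_ ?_ ?_ hd).resolve_left hbd) <;>
      simp only [ne_eq, ho, hd] <;> clear * - hne <;> grind
  have hne := distinct hc hd
  have hb₁ : G.Adj a₁ b₁ := (hb _).2 (by simp)
  have hb₂ : G.Adj a₁ b₂ := (hb _).2 (by simp)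
  have hbc' : G.Adj b₂ c₂ := by
    refine (adj_or ?_ ?_ ?_ hc).resolve_left fun hadj => ?_
    rotate_right
    · refine absurd (h.eq_of_common_neighbor ?_ hb₁ hbc.symm hb₂ hadj.symm) ?_ <;>
        clear * - hne <;> grind
    all_goals simp only [ne_eq, ho, hc]
    all_goals clear * - hne; grind
  have hbd' : G.Adj b₂ d₂ := by
    refine (adj_or ?_ ?_ ?_ hd).resolve_left fun hadj => ?_
    rotate_right
    · refine absurd (h.eq_of_common_neighbor ?_ hb₁ hbd.symm hb₂ hadj.symm) ?_ <;>
        clear * - hne <;> grind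
    all_goals simp only [ne_eq, ho, hd]
    all_goals clear * - hne; grind
  have hcd : G.Adj c₁ d₂ := by
    refine (adj_or ?_ ?_ ?_ hd).resolve_left (h.not_triangle hbc hbd) <;>
      simp only [ne_eq, ho, hd] <;> clear * - hne <;> grind
  have hcd' : G.Adj c₂ d₁ := by
    refine (adj_or ?_ ?_ ?_ hd).resolve_right (h.not_triangle hbc' hbd') <;>
      simp only [ne_eq, ho, hd] <;> clear * - hne <;> grind
  have hnd := h.nodup_of_neighbors ho hb hc hd
  refine h.nonempty_iso_of_forall_adj (List.nodup_iff_injective_get.1 hnd) fun i j hij => ?_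
  have key : ∀ i : Fin 10, ∀ j ∈ petersenNeighbors i, i < j →
      G.Adj ([o, a₁, a₂, a₃, b₁, b₂, c₁, c₂, d₁, d₂].get i)
        ([o, a₁, a₂, a₃, b₁, b₂, c₁, c₂, d₁, d₂].get j) := by
    simp [Fin.forall_fin_succ, petersenNeighbors, ho, hb, hc, hd, hbc, hbc', hbd, hbd', hcd, hcd']
  rcases lt_trichotomy i j with hlt | rfl | hgt
  · exact key i j hij hlt
  · exact absurd hij (petersenGraph.irrefl)
  · exact (key j i hij.symm hgt).symm

end SimpleGraph.IsSRGWith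

/-- Sign vectors of length `11` with six entries `1`, two entries `0` and three entries `-1`. -/
def IsBalanced (s : Fin 11 → SignType) : Prop :=
  {i | s i = 1}.ncard = 6 ∧ {i | s i = 0}.ncard = 2 ∧ {i | s i = -1}.ncard = 3

/-- The sign vectors whose inner products with the ten rows obtained from the Petersen graph lie in
`{3, 0, -3}`, for vectors of coordinate sum `3`. -/
def IsAdmissible (s : Fin 11 → SignType) : Prop :=
  ∀ k : Fin 10, 3 - (s 0 : ℤ) - (s k.succ : ℤ) -
    2 * ((petersenNeighbors k).map fun j => (s j.succ : ℤ)).sum ∈ [3, 0, -3]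

/-- The condition of `IsAdmissible` at a vertex with entry `v` whose neighbours have the entries
`a`, `b`, `c`, where `o` is the entry at `0`. -/
def admissibleAt (o v a b c : SignType) : Bool :=
  3 - (o : ℤ) - v - 2 * (a + b + c) ∈ [3, 0, -3]

/-- The list version of `IsAdmissible`. -/
def admissibleList : List SignType → Bool
  | [o, v₀, v₁, v₂, v₃, v₄, v₅, v₆, v₇, v₈, v₉] =>
    admissibleAt o v₀ v₁ v₂ v₃ && admissibleAt o v₁ v₀ v₄ v₅ && admissibleAt o v₂ v₀ v₆ v₇ &&
    admissibleAt o v₃ v₀ v₈ v₉ && admissibleAt o v₄ v₁ v₆ v₈ && admissibleAt o v₅ v₁ v₇ v₉ &&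
    admissibleAt o v₆ v₂ v₄ v₉ && admissibleAt o v₇ v₂ v₅ v₈ && admissibleAt o v₈ v₃ v₄ v₇ &&
    admissibleAt o v₉ v₃ v₅ v₆
  | _ => false

lemma admissibleList_ofFn (s : Fin 11 → SignType) :
    admissibleList (List.ofFn s) = true ↔ IsAdmissible s := by
  simp [IsAdmissible, Fin.forall_fin_succ, petersenNeighbors, admissibleList, admissibleAt,
    List.ofFn_succ, and_assoc, add_assoc]

/-- The sign lists of length `m` with `p` entries `1`, `z` entries `0` and `n` entries `-1`. -/
def signLists : ℕ → ℕ → ℕ → ℕ → List (List SignType)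
  | 0, p, z, n => if p = 0 ∧ z = 0 ∧ n = 0 then [[]] else []
  | m + 1, p, z, n =>
    (if p = 0 then [] else (signLists m (p - 1) z n).map (1 :: ·)) ++
    ((if z = 0 then [] else (signLists m p (z - 1) n).map (0 :: ·)) ++
    (if n = 0 then [] else (signLists m p z (n - 1)).map (-1 :: ·)))

lemma mem_signLists {m p z n : ℕ} {l : List SignType} :
    l ∈ signLists m p z n ↔
      l.length = m ∧ l.count 1 = p ∧ l.count 0 = z ∧ l.count (-1) = n := by
  induction m generalizing p z n l with
  | zero =>
    rw [signLists, List.length_eq_zero_iff]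
    constructor
    · split_ifs with h
      · rintro hl
        simp_all
      · simp
    · rintro ⟨rfl, rfl, rfl, rfl⟩
      simp
  | succ m ih =>
    cases l with
    | nil =>
      simp only [signLists, List.mem_append]
      split_ifs <;> simp
    | cons a l =>
      simp only [signLists, List.mem_append]
      cases a <;> split_ifs <;> simp [ih] <;> omega

lemma nodup_signLists (m p z n : ℕ) : (signLists m p z n).Nodup := by
  induction m generalizing p z n with
  | zero => rw [signLists]; split_ifs <;> simp
  | succ m ih =>
    simp only [signLists, List.nodup_append']
    refine ⟨?_, ⟨?_, ?_, ?_⟩, ?_⟩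
    · split_ifs <;> simp [List.nodup_map_iff (List.cons_injective), ih]
    · split_ifs <;> simp [List.nodup_map_iff (List.cons_injective), ih]
    · split_ifs <;> simp [List.nodup_map_iff (List.cons_injective), ih]
    · split_ifs <;> simp [List.disjoint_left]
    · split_ifs <;> simp [List.disjoint_left]

lemma length_filter_signLists :
    ((signLists 11 6 2 3).filter admissibleList).length = 90 := by
  decide +kernel

lemma count_ofFn_eq_ncard {n : ℕ} (s : Fin n → SignType) (a : SignType) :
    (List.ofFn s).count a = {i | s i = a}.ncard := by
  rw [← Multiset.coe_count, ← Fin.univ_val_map, Multiset.count_map, Set.ncard_eq_toFinset_card',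
    Set.toFinset_ofPred, ← Finset.filter_val, Finset.card_val]
  simp only [eq_comm]

lemma ncard_isBalanced_isAdmissible :
    {s : Fin 11 → SignType | IsBalanced s ∧ IsAdmissible s}.ncard = 90 := by
  classical
  have himage : List.ofFn '' {s : Fin 11 → SignType | IsBalanced s ∧ IsAdmissible s} =
      ((signLists 11 6 2 3).filter admissibleList).toFinset := by
    ext l
    simp only [Set.mem_image, Set.mem_ofPred_eq, List.coe_toFinset, List.mem_filter,
      mem_signLists]
    constructor
    · rintro ⟨s, ⟨⟨h₁, h₂, h₃⟩, hs⟩, rfl⟩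
      exact ⟨⟨List.length_ofFn, by rw [count_ofFn_eq_ncard, h₁], by rw [count_ofFn_eq_ncard, h₂],
        by rw [count_ofFn_eq_ncard, h₃]⟩, (admissibleList_ofFn s).2 hs⟩
    · rintro ⟨⟨hlen, h₁, h₂, h₃⟩, hl⟩
      obtain ⟨s, rfl⟩ : ∃ s : Fin 11 → SignType, List.ofFn s = l := by
        rw [← hlen]
        exact ⟨l.get, List.ofFn_get l⟩
      simp only [count_ofFn_eq_ncard] at h₁ h₂ h₃
      exact ⟨s, ⟨⟨h₁, h₂, h₃⟩, (admissibleList_ofFn s).1 hl⟩, rfl⟩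
  rw [← (List.ofFn_injective.injOn).ncard_image, himage, Set.ncard_coe_finset,
    List.toFinset_card_of_nodup ((nodup_signLists _ _ _ _).filter _), length_filter_signLists]

lemma SignType.intCast_eq (a : SignType) :
    (a : ℤ) = 1 - (if a = 0 then 1 else 0) - 2 * (if a = -1 then 1 else 0) := by
  cases a <;> decide

lemma IsBalanced.sum_eq {s : Fin 11 → SignType} (hs : IsBalanced s) : ∑ i, (s i : ℤ) = 3 := by
  obtain ⟨-, h₂, h₃⟩ := hs
  rw [Set.ncard_eq_toFinset_card', Set.toFinset_ofPred] at h₂ h₃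
  simp only [SignType.intCast_eq, Finset.sum_sub_distrib, ← Finset.mul_sum, Finset.sum_boole, h₂,
    h₃]
  norm_num

lemma IsBalanced.exists_eq_zero_iff {t : Fin 11 → SignType} (ht : IsBalanced t) (h₀ : t 0 = 0) :
    ∃ a : Fin 10, ∀ j : Fin 10, t j.succ = 0 ↔ j = a := by
  obtain ⟨x, y, hxy, h⟩ := Set.ncard_eq_two.1 ht.2.1
  have hmem (i : Fin 11) : t i = 0 ↔ i = x ∨ i = y := by
    simpa using congrArg (i ∈ ·) h
  rcases (hmem 0).1 h₀ with rfl | rfl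
  · obtain ⟨a, rfl⟩ := Fin.exists_succ_eq.2 hxy.symm
    exact ⟨a, fun j => by simp [hmem]⟩
  · obtain ⟨a, rfl⟩ := Fin.exists_succ_eq.2 hxy
    exact ⟨a, fun j => by simp [hmem]⟩

lemma IsBalanced.card_eq_neg_one {t : Fin 11 → SignType} (ht : IsBalanced t) (h₀ : t 0 = 0) :
    (Finset.univ.filter fun j : Fin 10 => t j.succ = -1).card = 3 := by
  have h := ht.2.2
  rw [Set.ncard_eq_toFinset_card', Set.toFinset_ofPred, Fin.univ_succ, Finset.filter_cons,
    if_neg (by rw [h₀]; decide), Finset.filter_map, Finset.card_map] at h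
  exact h

/-- The inner product of a balanced vector with a balanced vector vanishing at `0`. -/
lemma IsBalanced.sum_mul_eq {s t : Fin 11 → SignType} (hs : IsBalanced s) (h₀ : t 0 = 0)
    {a : Fin 10} (ha : ∀ j : Fin 10, t j.succ = 0 ↔ j = a) :
    ∑ i, (s i : ℤ) * t i = 3 - s 0 - s a.succ -
      2 * ∑ j with t (Fin.succ j) = -1, (s j.succ : ℤ) := by
  have hsum := hs.sum_eq
  rw [Fin.sum_univ_succ] at hsum ⊢
  simp only [SignType.intCast_eq (t _), ha, mul_sub, Finset.sum_sub_distrib, mul_ite, mul_one,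
    mul_zero, Finset.sum_ite_eq', Finset.mem_univ, if_true, h₀, Finset.sum_filter, Finset.mul_sum]
  simp only [mul_comm (2 : ℤ)]
  rw [SignType.coe_zero, mul_zero]
  linarith

lemma IsBalanced.sum_mul_eq_of_eq_zero {s t : Fin 11 → SignType} (hs : IsBalanced s)
    (ht : IsBalanced t) (hs₀ : s 0 = 0) (ht₀ : t 0 = 0) {a b : Fin 10}
    (hb : ∀ j : Fin 10, s j.succ = 0 ↔ j = b) (ha : ∀ j : Fin 10, t j.succ = 0 ↔ j = a) :
    ∑ i, (s i : ℤ) * t i = -4 + (if a = b then 1 else 0) + 2 * (if s a.succ = -1 then 1 else 0) +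
      2 * (if t b.succ = -1 then 1 else 0) +
      4 * (Finset.univ.filter fun j : Fin 10 => t j.succ = -1 ∧ s j.succ = -1).card := by
  rw [hs.sum_mul_eq ht₀ ha, hs₀]
  simp only [SignType.intCast_eq (s _), hb, Finset.sum_sub_distrib, Finset.sum_const,
    ht.card_eq_neg_one ht₀, ← Finset.mul_sum, Finset.sum_boole, Finset.filter_filter]
  have hcard : (Finset.univ.filter fun j : Fin 10 => t j.succ = -1 ∧ j = b).card =
      if t b.succ = -1 then 1 else 0 := by
    rw [Finset.filter_and, Finset.filter_eq' _ b]
    split_ifs <;> simp_all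
  rw [hcard, SignType.coe_zero]
  push_cast
  ring

/-- Pairwise orthogonal balanced sign vectors vanishing at `0` have different further zeros, so ten
of them can be indexed by their further zero. -/
lemma exists_range_eq_of_ncard_eq_ten {S : Set (Fin 11 → SignType)} (hS : S.ncard = 10)
    (hbal : ∀ s ∈ S, IsBalanced s) (hzero : ∀ s ∈ S, s 0 = 0)
    (horth : ∀ s ∈ S, ∀ t ∈ S, s ≠ t → ∑ i, (s i : ℤ) * t i = 0) :
    ∃ t : Fin 10 → Fin 11 → SignType, Function.Injective t ∧ Set.range t = S ∧
      ∀ i j : Fin 10, t i j.succ = 0 ↔ j = i := by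
  choose a ha using fun s : S => (hbal s s.2).exists_eq_zero_iff (hzero s s.2)
  have hinj : Function.Injective a := by
    intro s t hst
    by_contra hne
    have h := (hbal s s.2).sum_mul_eq_of_eq_zero (hbal t t.2) (hzero s s.2) (hzero t t.2) (ha s)
      (ha t)
    rw [horth s s.2 t t.2 (Subtype.coe_injective.ne hne), if_pos hst.symm] at h
    omega
  have hfin : S.Finite := Set.finite_of_ncard_ne_zero (by omega)
  have := hfin.fintype
  have hbij : Function.Bijective a := by
    refine (Fintype.bijective_iff_injective_and_card a).2 ⟨hinj, ?_⟩
    rw [← Nat.card_eq_fintype_card, Nat.card_coe_set_eq, hS, Fintype.card_fin]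
  let e := Equiv.ofBijective a hbij
  refine ⟨fun i => e.symm i, Subtype.coe_injective.comp e.symm.injective, ?_, fun i j => ?_⟩
  · exact (e.symm.surjective.range_comp _).trans Subtype.range_coe
  · rw [ha, show a (e.symm i) = i from e.apply_symm_apply i]

lemma exists_petersenGraph_iso {t : Fin 10 → Fin 11 → SignType} (hinj : Function.Injective t)
    (hbal : ∀ i, IsBalanced (t i)) (hzero : ∀ i, t i 0 = 0)
    (hdiag : ∀ i j : Fin 10, t i j.succ = 0 ↔ j = i)
    (horth : ∀ i j, t i ≠ t j → ∑ k, (t i k : ℤ) * t j k = 0) :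
    ∃ e : Fin 10 ≃ Fin 10, ∀ i j, j ∈ petersenNeighbors i ↔ t (e i) (e j).succ = -1 := by
  have key (i j : Fin 10) (hij : i ≠ j) :
      (t i j.succ = -1 ↔ t j i.succ = -1) ∧
      (Finset.univ.filter fun k : Fin 10 => t i k.succ = -1 ∧ t j k.succ = -1).card =
        if t i j.succ = -1 then 0 else 1 := by
    have h := (hbal j).sum_mul_eq_of_eq_zero (hbal i) (hzero j) (hzero i) (hdiag j) (hdiag i)
    rw [horth j i (hinj.ne hij.symm), if_neg hij] at h
    split_ifs at h ⊢ with h₁ h₂ h₂ <;> simp only [h₁, h₂, iff_self, true_and] <;> omega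
  let G : SimpleGraph (Fin 10) :=
    { Adj i j := t i j.succ = -1
      symm := ⟨fun i j h => by
        rcases eq_or_ne i j with rfl | hij
        · exact h
        · exact (key i j hij).1.1 h⟩
      loopless := ⟨fun i h => by simp [(hdiag i i).2 rfl] at h⟩ }
  have hcard (i j : Fin 10) [Fintype (G.commonNeighbors i j)] :
      Fintype.card (G.commonNeighbors i j) =
        (Finset.univ.filter fun k : Fin 10 => t i k.succ = -1 ∧ t j k.succ = -1).card :=
    Fintype.card_of_subtype _ fun k => by simp [SimpleGraph.mem_commonNeighbors, G]
  have : DecidableRel G.Adj := fun i j => inferInstanceAs (Decidable (t i j.succ = -1))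
  have hG : G.IsSRGWith 10 3 0 1 :=
    { card := Fintype.card_fin 10
      regular := fun i => by
        rw [← SimpleGraph.card_neighborFinset_eq_degree, SimpleGraph.neighborFinset_eq_filter]
        convert (hbal i).card_eq_neg_one (hzero i)
      of_adj := fun i j hij => by
        rw [hcard, (key i j hij.ne).2, if_pos hij]
      of_not_adj := fun i j hij hadj => by
        rw [hcard, (key i j hij).2, if_neg hadj] }
  obtain ⟨e⟩ := hG.nonempty_petersenGraph_iso
  exact ⟨e.toEquiv, fun i j => (e.map_adj_iff (v := i) (w := j)).symm⟩

lemma IsBalanced.comp_equiv {s : Fin 11 → SignType} (hs : IsBalanced s) (σ : Equiv.Perm (Fin 11)) :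
    IsBalanced (s ∘ σ) := by
  have key (a : SignType) : {i | (s ∘ σ) i = a}.ncard = {i | s i = a}.ncard :=
    Set.ncard_preimage_of_injective_subset_range (s := {i | s i = a}) σ.injective (by simp)
  exact ⟨(key _).trans hs.1, (key _).trans hs.2.1, (key _).trans hs.2.2⟩

/-- Ten pairwise orthogonal balanced sign vectors vanishing at `0` have inner products in
`{3, 0, -3}` with exactly `90` balanced sign vectors. -/
lemma ncard_isBalanced_sum_mul_mem {S : Set (Fin 11 → SignType)} (hS : S.ncard = 10)
    (hbal : ∀ s ∈ S, IsBalanced s) (hzero : ∀ s ∈ S, s 0 = 0)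
    (horth : ∀ s ∈ S, ∀ t ∈ S, s ≠ t → ∑ i, (s i : ℤ) * t i = 0) :
    {s | IsBalanced s ∧ ∀ t ∈ S, ∑ i, (s i : ℤ) * t i ∈ [3, 0, -3]}.ncard = 90 := by
  obtain ⟨t, hinj, rfl, hdiag⟩ := exists_range_eq_of_ncard_eq_ten hS hbal hzero horth
  rw [Set.forall_mem_range] at hbal hzero
  simp only [Set.forall_mem_range] at horth ⊢
  obtain ⟨e, he⟩ := exists_petersenGraph_iso hinj hbal hzero hdiag horth
  let σ : Equiv.Perm (Fin 11) := Equiv.Perm.decomposeFin.symm (0, e)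
  have hσ₀ : σ 0 = 0 := by simp [σ]
  have hσ (k : Fin 10) : σ k.succ = (e k).succ := by simp [σ]
  have hnd : ∀ k, (petersenNeighbors k).Nodup := by decide
  have hsum (s : Fin 11 → SignType) (k : Fin 10) :
      ((petersenNeighbors k).map fun j => ((s ∘ σ) j.succ : ℤ)).sum =
        ∑ j with t (e k) (Fin.succ j) = -1, (s j.succ : ℤ) := by
    rw [← List.sum_toFinset _ (hnd k)]
    refine Finset.sum_equiv e (fun j => by simp [he]) fun j _ => by simp [hσ]
  have hiff (s : Fin 11 → SignType) (hs : IsBalanced s) :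
      (∀ k, ∑ i, (s i : ℤ) * t k i ∈ [3, 0, -3]) ↔ IsAdmissible (s ∘ σ) := by
    rw [← e.forall_congr_right]
    refine forall_congr' fun k => ?_
    rw [hs.sum_mul_eq (hzero _) (hdiag _), hsum, Function.comp_apply, Function.comp_apply, hσ₀, hσ]
  rw [← ncard_isBalanced_isAdmissible]
  refine Set.ncard_congr (fun s _ => s ∘ σ) ?_ ?_ ?_
  · exact fun s hs => ⟨hs.1.comp_equiv σ, (hiff s hs.1).1 hs.2⟩
  · exact fun s s' _ _ h => σ.surjective.injective_comp_right h
  · intro s hs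
    have hcomp : (s ∘ σ.symm) ∘ σ = s := by ext i; simp
    have hb := hs.1.comp_equiv σ.symm
    exact ⟨s ∘ σ.symm, ⟨hb, (hiff _ hb).2 (by rw [hcomp]; exact hs.2)⟩, hcomp⟩

section Geometry

variable {x : Fin 11 → EuclideanSpace ℝ (Fin 10)}

/-- The vector with coordinates `s` with respect to `x`, divided by `3`. -/
def vecOf (x : Fin 11 → EuclideanSpace ℝ (Fin 10)) (s : Fin 11 → SignType) :
    EuclideanSpace ℝ (Fin 10) :=
  (1 / 3 : ℝ) • ∑ i, (s i : ℝ) • x i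

lemma IsRegularSimplex.inner_eq (hx : IsRegularSimplex x) (i j : Fin 11) :
    ⟪x i, x j⟫ = 11 / 10 * (if j = i then 1 else 0) - 1 / 10 := by
  split_ifs with h
  · rw [h, real_inner_self_eq_norm_sq, hx.1]; norm_num
  · rw [hx.2 i j (Ne.symm h)]; norm_num

lemma IsRegularSimplex.inner_sum_smul (hx : IsRegularSimplex x) (c : Fin 11 → ℝ) (i : Fin 11) :
    ⟪x i, ∑ j, c j • x j⟫ = 11 / 10 * c i - 1 / 10 * ∑ j, c j := by
  simp_rw [inner_sum, real_inner_smul_right, hx.inner_eq, mul_sub, Finset.sum_sub_distrib,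
    Finset.mul_sum]
  congr 1
  · rw [Finset.sum_eq_single i (fun j _ h => by simp [h]) (by simp)]
    simp [mul_comm]
  · exact Finset.sum_congr rfl fun j _ => mul_comm _ _

lemma IsRegularSimplex.span_eq_top (hx : IsRegularSimplex x) :
    Submodule.span ℝ (Set.range x) = ⊤ := by
  have hli : LinearIndependent ℝ fun k : Fin 10 => x k.succ := by
    rw [Fintype.linearIndependent_iff]
    intro c hc
    have h (i : Fin 11) := hx.inner_sum_smul (Fin.cons 0 c) i
    simp only [Fin.sum_univ_succ (n := 10), Fin.cons_zero, Fin.cons_succ, zero_smul, hc, zero_add,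
      inner_zero_right] at h
    intro k
    have h₀ := h 0
    have hk := h k.succ
    simp only [Fin.cons_zero, Fin.cons_succ] at h₀ hk
    linarith
  have htop := hli.span_eq_top_of_card_eq_finrank (by simp)
  refine top_le_iff.1 (htop ▸ Submodule.span_mono ?_)
  rintro _ ⟨k, rfl⟩
  exact ⟨k.succ, rfl⟩

lemma IsRegularSimplex.ext_inner (hx : IsRegularSimplex x) {y z : EuclideanSpace ℝ (Fin 10)}
    (h : ∀ i, ⟪x i, y⟫ = ⟪x i, z⟫) : y = z := by
  refine ext_inner_left ℝ fun v => ?_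
  have hv : v ∈ Submodule.span ℝ (Set.range x) := hx.span_eq_top ▸ Submodule.mem_top
  induction hv using Submodule.span_induction with
  | mem v hv => obtain ⟨i, rfl⟩ := hv; exact h i
  | zero => simp
  | add u v _ _ hu hv => simp [inner_add_left, hu, hv]
  | smul a v _ hv => simp [real_inner_smul_left, hv]

lemma IsBalanced.sum_eq_real {s : Fin 11 → SignType} (hs : IsBalanced s) :
    ∑ i, (s i : ℝ) = 3 := by
  have h : ((∑ i, (s i : ℤ) : ℤ) : ℝ) = 3 := by rw [hs.sum_eq]; norm_num
  simpa using h

lemma IsRegularSimplex.inner_vecOf (hx : IsRegularSimplex x) {s : Fin 11 → SignType}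
    (hs : IsBalanced s) (i : Fin 11) : ⟪x i, vecOf x s⟫ = 11 / 30 * s i - 1 / 10 := by
  rw [vecOf, real_inner_smul_right, hx.inner_sum_smul, hs.sum_eq_real]
  ring

lemma IsRegularSimplex.inner_vecOf_vecOf (hx : IsRegularSimplex x) {s t : Fin 11 → SignType}
    (hs : IsBalanced s) (ht : IsBalanced t) :
    ⟪vecOf x s, vecOf x t⟫ = 11 / 90 * ((∑ i, (s i : ℤ) * t i : ℤ) : ℝ) - 1 / 10 := by
  rw [vecOf, real_inner_smul_left, sum_inner]
  simp_rw [real_inner_smul_left, hx.inner_vecOf ht, mul_sub, Finset.sum_sub_distrib,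
    ← Finset.sum_mul, hs.sum_eq_real]
  push_cast
  simp_rw [Finset.mul_sum]
  rw [mul_sub, Finset.mul_sum]
  congr 1
  · refine Finset.sum_congr rfl fun i _ => ?_
    simp
    ring
  · norm_num

lemma SignType.injective_coe_real : Function.Injective ((↑) : SignType → ℝ) := by
  intro a b h
  cases a <;> cases b <;> simp at h ⊢ <;> norm_num at h

lemma IsRegularSimplex.injOn_vecOf (hx : IsRegularSimplex x) :
    Set.InjOn (vecOf x) {s | IsBalanced s} := by
  intro s hs t ht h
  funext i
  have hi := congrArg (⟪x i, ·⟫) h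
  simp only [hx.inner_vecOf hs, hx.inner_vecOf ht] at hi
  exact SignType.injective_coe_real (by linarith)

/-- The entries of a balanced sign vector are read off from the inner products with `x`. -/
lemma IsRegularSimplex.inner_vecOf_eq_iff (hx : IsRegularSimplex x) {s : Fin 11 → SignType}
    (hs : IsBalanced s) (i : Fin 11) :
    (⟪x i, vecOf x s⟫ = α1 ↔ s i = 1) ∧ (⟪x i, vecOf x s⟫ = α2 ↔ s i = 0) ∧
      (⟪x i, vecOf x s⟫ = α3 ↔ s i = -1) := by
  rw [hx.inner_vecOf hs, α1, α2, α3]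
  cases s i <;> norm_num <;> decide

lemma IsBalanced.sum_mul_self {s : Fin 11 → SignType} (hs : IsBalanced s) :
    ∑ i, (s i : ℤ) * s i = 9 := by
  have h (a : SignType) : (a : ℤ) * a = 1 - if a = 0 then 1 else 0 := by cases a <;> decide
  have h₂ := hs.2.1
  rw [Set.ncard_eq_toFinset_card', Set.toFinset_ofPred] at h₂
  simp only [h, Finset.sum_sub_distrib, Finset.sum_boole, h₂]
  norm_num

/-- The unit vectors with the inner product profile of `Yset` are the vectors of balanced sign
vectors. -/
lemma IsRegularSimplex.exists_vecOf_eq (hx : IsRegularSimplex x) {y : EuclideanSpace ℝ (Fin 10)}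
    (h₁ : {i : Fin 11 | ⟪x i, y⟫ = α1}.ncard = 6) (h₂ : {i : Fin 11 | ⟪x i, y⟫ = α2}.ncard = 2)
    (h₃ : {i : Fin 11 | ⟪x i, y⟫ = α3}.ncard = 3) : ∃ s, IsBalanced s ∧ vecOf x s = y := by
  have h₁₂ : α1 ≠ α2 := by norm_num [α1, α2]
  have h₁₃ : α1 ≠ α3 := by norm_num [α1, α3]
  have h₂₃ : α2 ≠ α3 := by norm_num [α2, α3]
  have huniv : {i : Fin 11 | ⟪x i, y⟫ = α1} ∪ {i : Fin 11 | ⟪x i, y⟫ = α2} ∪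
      {i : Fin 11 | ⟪x i, y⟫ = α3} = Set.univ := by
    refine Set.eq_of_subset_of_ncard_le (Set.subset_univ _) ?_
    rw [Set.ncard_union_eq, Set.ncard_union_eq, h₁, h₂, h₃, Set.ncard_univ, Nat.card_fin]
    · exact Set.disjoint_left.2 fun i hi hi' => h₁₂ (hi.symm.trans hi')
    · refine Set.disjoint_left.2 fun i hi hi' => ?_
      rcases hi with hi | hi
      · exact h₁₃ (hi.symm.trans hi')
      · exact h₂₃ (hi.symm.trans hi')
  let s : Fin 11 → SignType := fun i =>
    if ⟪x i, y⟫ = α1 then 1 else if ⟪x i, y⟫ = α2 then 0 else -1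
  have hs (i : Fin 11) : (s i = 1 ↔ ⟪x i, y⟫ = α1) ∧ (s i = 0 ↔ ⟪x i, y⟫ = α2) ∧
      (s i = -1 ↔ ⟪x i, y⟫ = α3) := by
    have hi : i ∈ Set.univ := Set.mem_univ i
    rw [← huniv] at hi
    rcases hi with (hi | hi) | hi <;> rw [Set.mem_ofPred_eq] at hi <;>
      simp [s, hi, h₁₂, h₁₃, h₂₃, h₁₂.symm, h₁₃.symm, h₂₃.symm]
  have hbal : IsBalanced s := by
    simp only [IsBalanced, hs]
    exact ⟨h₁, h₂, h₃⟩
  refine ⟨s, hbal, hx.ext_inner fun i => ?_⟩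
  have h := hx.inner_vecOf_eq_iff hbal i
  have hi : i ∈ Set.univ := Set.mem_univ i
  rw [← huniv] at hi
  rcases hi with (hi | hi) | hi <;> rw [Set.mem_ofPred_eq] at hi <;> rw [hi]
  · exact h.1.2 ((hs i).1.2 hi)
  · exact h.2.1.2 ((hs i).2.1.2 hi)
  · exact h.2.2.2 ((hs i).2.2.2 hi)

lemma IsRegularSimplex.exists_vecOf_eq_of_mem_Y1set (hx : IsRegularSimplex x)
    {y : EuclideanSpace ℝ (Fin 10)} (hy : y ∈ Y1set x) :
    ∃ s, IsBalanced s ∧ s 0 = 0 ∧ vecOf x s = y := by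
  obtain ⟨-, h₀, h₁, h₂, h₃⟩ := hy
  have hrest {a : ℝ} (ha : a ≠ α2) :
      {i : Fin 11 | i ≠ 0 ∧ ⟪x i, y⟫ = a} = {i : Fin 11 | ⟪x i, y⟫ = a} := by
    ext i
    simp only [Set.mem_ofPred_eq, and_iff_right_iff_imp]
    rintro hi rfl
    exact ha (hi.symm.trans h₀)
  have hinsert : {i : Fin 11 | ⟪x i, y⟫ = α2} = insert 0 {i : Fin 11 | i ≠ 0 ∧ ⟪x i, y⟫ = α2} := by
    ext i
    rcases eq_or_ne i 0 with rfl | hi <;> simp_all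
  rw [hrest (by norm_num [α1, α2])] at h₁
  rw [hrest (by norm_num [α2, α3])] at h₃
  have h₂' : {i : Fin 11 | ⟪x i, y⟫ = α2}.ncard = 2 := by
    rw [hinsert, Set.ncard_insert_of_notMem (by simp), h₂]
  obtain ⟨s, hs, rfl⟩ := hx.exists_vecOf_eq h₁ h₂' h₃
  exact ⟨s, hs, (hx.inner_vecOf_eq_iff hs 0).2.1.1 h₀, rfl⟩

lemma IsRegularSimplex.inner_vecOf_vecOf_eq_iff (hx : IsRegularSimplex x)
    {s t : Fin 11 → SignType} (hs : IsBalanced s) (ht : IsBalanced t) :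
    ⟪vecOf x s, vecOf x t⟫ = α2 ↔ ∑ i, (s i : ℤ) * t i = 0 := by
  rw [hx.inner_vecOf_vecOf hs ht, α2, ← Int.cast_inj (α := ℝ)]
  constructor <;> intro h <;> push_cast at h ⊢ <;> linarith

lemma IsRegularSimplex.inner_vecOf_vecOf_mem_iff (hx : IsRegularSimplex x)
    {s t : Fin 11 → SignType} (hs : IsBalanced s) (ht : IsBalanced t) :
    ⟪vecOf x s, vecOf x t⟫ ∈ ({α1, α2, α3} : Set ℝ) ↔ ∑ i, (s i : ℤ) * t i ∈ [3, 0, -3] := by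
  have h₁ : ⟪vecOf x s, vecOf x t⟫ = α1 ↔ ∑ i, (s i : ℤ) * t i = 3 := by
    rw [hx.inner_vecOf_vecOf hs ht, α1, ← Int.cast_inj (α := ℝ)]
    constructor <;> intro h <;> push_cast at h ⊢ <;> linarith
  have h₃ : ⟪vecOf x s, vecOf x t⟫ = α3 ↔ ∑ i, (s i : ℤ) * t i = -3 := by
    rw [hx.inner_vecOf_vecOf hs ht, α3, ← Int.cast_inj (α := ℝ)]
    constructor <;> intro h <;> push_cast at h ⊢ <;> linarith
  rw [Set.mem_insert_iff, Set.mem_insert_iff, Set.mem_singleton_iff, h₁,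
    hx.inner_vecOf_vecOf_eq_iff hs ht, h₃]
  simp only [List.mem_cons, List.not_mem_nil, or_false]

lemma IsRegularSimplex.norm_vecOf (hx : IsRegularSimplex x) {s : Fin 11 → SignType}
    (hs : IsBalanced s) : ‖vecOf x s‖ = 1 := by
  have h := hx.inner_vecOf_vecOf hs hs
  rw [real_inner_self_eq_norm_sq, hs.sum_mul_self] at h
  exact (sq_eq_sq₀ (norm_nonneg _) zero_le_one).1 (by rw [h]; norm_num)

end Geometry

/-- The set `Z` has exactly 90 elements. -/
theorem card_Zset_eq (x : Fin 11 → EuclideanSpace ℝ (Fin 10))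
    (hx : IsRegularSimplex x)
    (C2 : Set (EuclideanSpace ℝ (Fin 10))) (hC2 : IsClique10 x C2) :
    (Zset x C2).ncard = 90 := by
  obtain ⟨hsub, hcard, hadj⟩ := hC2
  let S : Set (Fin 11 → SignType) := {s | IsBalanced s ∧ s 0 = 0 ∧ vecOf x s ∈ C2}
  have hinj : Set.InjOn (vecOf x) S := hx.injOn_vecOf.mono fun s hs => hs.1
  have himage : vecOf x '' S = C2 := by
    refine Set.Subset.antisymm (Set.image_subset_iff.2 fun s hs => hs.2.2) fun y hy => ?_
    obtain ⟨s, hs, h₀, rfl⟩ := hx.exists_vecOf_eq_of_mem_Y1set (hsub hy)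
    exact ⟨s, ⟨hs, h₀, hy⟩, rfl⟩
  have hS : S.ncard = 10 := by rw [← hcard, ← himage, hinj.ncard_image]
  have hZ : Zset x C2 =
      vecOf x '' {s | IsBalanced s ∧ ∀ t ∈ S, ∑ i, (s i : ℤ) * t i ∈ [3, 0, -3]} := by
    ext u
    constructor
    · rintro ⟨⟨-, -, h₁, h₂, h₃⟩, hu⟩
      obtain ⟨s, hs, rfl⟩ := hx.exists_vecOf_eq h₁ h₂ h₃
      exact ⟨s, ⟨hs, fun t ht => (hx.inner_vecOf_vecOf_mem_iff hs ht.1).1 (hu _ ht.2.2)⟩, rfl⟩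
    · rintro ⟨s, ⟨hs, hst⟩, rfl⟩
      have hmem : ∀ w ∈ C2, ⟪vecOf x s, w⟫ ∈ ({α1, α2, α3} : Set ℝ) := by
        rw [← himage]
        rintro _ ⟨t, ht, rfl⟩
        exact (hx.inner_vecOf_vecOf_mem_iff hs ht.1).2 (hst t ht)
      refine ⟨⟨hx.norm_vecOf hs, fun hs' => ?_, ?_⟩, hmem⟩
      · have h := hmem _ hs'
        rw [hx.inner_vecOf_vecOf_mem_iff hs hs, hs.sum_mul_self] at h
        exact absurd h (by decide)
      · simp only [hx.inner_vecOf_eq_iff hs]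
        exact hs
  rw [hZ, (hx.injOn_vecOf.mono fun s hs => hs.1).ncard_image]
  refine ncard_isBalanced_sum_mul_mem hS (fun s hs => hs.1) (fun s hs => hs.2.1)
    fun s hs t ht hst => ?_
  exact (hx.inner_vecOf_vecOf_eq_iff hs.1 ht.1).1
    (hadj _ hs.2.2 _ ht.2.2 (hinj.ne hs ht hst))
end
end

section
/- Let x : Fin 11 → ℝ^10 be a regular 11-simplex, C1 = {x 0, …, x 10}, let C2 be a clique of order 10 in the graph on Y1, and let Z = Z1 ∪ Z2 be the splitting of Z into two 45-element parts with all inner products within each part in {α1, α2, α3} and all inner products between the parts outside {α1, α2, α3}. Then there exists a bijection f from C1 ∪ C2 ∪ Z1 onto C1 ∪ C2 ∪ Z2 preserving all inner products; equivalently, the Gram matrices of C1 ∪ C2 ∪ Z1 and C1 ∪ C2 ∪ Z2 are permutationally equivalent. -/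
open RealInnerProductSpace

noncomputable section

/-- In a set of size at most `|A| + |B| + |C|`, pairwise disjoint subsets `A`, `B`, `C` cover. -/
lemma subset_union_of_ncard_le {ι : Type*} [Finite ι] {S A B C : Set ι}
    (hA : A ⊆ S) (hB : B ⊆ S) (hC : C ⊆ S) (hAB : Disjoint A B) (hAC : Disjoint A C)
    (hBC : Disjoint B C) (h : S.ncard ≤ A.ncard + B.ncard + C.ncard) : S ⊆ A ∪ B ∪ C := by
  refine (Set.eq_of_subset_of_ncard_le (Set.union_subset (Set.union_subset hA hB) hC) ?_).ge
  rw [Set.ncard_union_eq (hAC.union_left hBC), Set.ncard_union_eq hAB]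
  exact h

section Sign

/-- An integer is a sign if it is `0`, `1` or `-1`. -/
def IsSign (n : ℤ) : Prop := n = 0 ∨ n = 1 ∨ n = -1

lemma mem_angles_iff {r : ℝ} :
    r ∈ ({α1, α2, α3} : Set ℝ) ↔ ∃ n : ℤ, IsSign n ∧ r = -1/10 + 11/30 * (n : ℝ) := by
  simp only [Set.mem_insert_iff, Set.mem_singleton_iff, α1, α2, α3, IsSign]
  constructor
  · rintro (h | h | h)
    · exact ⟨1, by simp, by rw [h]; norm_num⟩
    · exact ⟨0, by simp, by rw [h]; norm_num⟩
    · exact ⟨-1, by simp, by rw [h]; norm_num⟩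
  · rintro ⟨n, rfl | rfl | rfl, h⟩ <;> rw [h] <;> norm_num

lemma code_inj {n m : ℤ} : (-1/10 + 11/30 * (n : ℝ) = -1/10 + 11/30 * (m : ℝ)) ↔ n = m := by
  constructor
  · intro h
    have : (n : ℝ) = m := by linarith
    exact_mod_cast this
  · rintro rfl; rfl

lemma code_eq_α1 {n : ℤ} : (-1/10 + 11/30 * (n : ℝ) = α1) ↔ n = 1 := by
  rw [← code_inj, α1]; norm_num

lemma code_eq_α2 {n : ℤ} : (-1/10 + 11/30 * (n : ℝ) = α2) ↔ n = 0 := by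
  rw [← code_inj, α2]; norm_num

lemma code_eq_α3 {n : ℤ} : (-1/10 + 11/30 * (n : ℝ) = α3) ↔ n = -1 := by
  rw [← code_inj, α3]; norm_num

/-- A sign vector of length `11` with sum `3` and squared norm `9` has six entries `1`,
two entries `0` and three entries `-1`. -/
lemma ncard_of_sign {t : Fin 11 → ℤ} (ht : ∀ i, IsSign (t i)) (hsum : ∑ i, t i = 3)
    (hsq : ∑ i, t i * t i = 9) :
    {i | t i = 1}.ncard = 6 ∧ {i | t i = 0}.ncard = 2 ∧ {i | t i = -1}.ncard = 3 := by
  have key : ∀ c : ℤ, (({i | t i = c}.ncard : ℕ) : ℤ) = ∑ i, if t i = c then 1 else 0 := by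
    intro c
    have : {i | t i = c} = ((Finset.univ.filter fun i => t i = c : Finset (Fin 11)) : Set _) := by
      ext; simp
    rw [this, Set.ncard_coe_finset]
    simp
  have h1 := key 1
  have h0 := key 0
  have hm := key (-1)
  have e1 : ∑ i, t i = (∑ i, if t i = 1 then 1 else 0) - ∑ i, if t i = -1 then 1 else 0 := by
    rw [← Finset.sum_sub_distrib]
    refine Finset.sum_congr rfl fun i _ => ?_
    rcases ht i with h | h | h <;> simp [h]
  have e2 : ∑ i, t i * t i =
      (∑ i, if t i = 1 then 1 else 0) + ∑ i, if t i = -1 then 1 else 0 := by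
    rw [← Finset.sum_add_distrib]
    refine Finset.sum_congr rfl fun i _ => ?_
    rcases ht i with h | h | h <;> simp [h]
  have e3 : (11 : ℤ) = (∑ i, if t i = 1 then 1 else 0) + (∑ i, if t i = -1 then 1 else 0) +
      ∑ i, if t i = 0 then 1 else 0 := by
    rw [← Finset.sum_add_distrib, ← Finset.sum_add_distrib]
    have : (11 : ℤ) = ∑ _i : Fin 11, 1 := by simp
    rw [this]
    refine Finset.sum_congr rfl fun i _ => ?_
    rcases ht i with h | h | h <;> simp [h]
  omega

/-- The expansion of `∑ (a - 1) (b - 1)` for vectors of length `11` with sum `3`. -/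
lemma sum_sub_one_mul_sub_one {a b : Fin 11 → ℤ} (ha : ∑ i, a i = 3) (hb : ∑ i, b i = 3) :
    ∑ i, (a i - 1) * (b i - 1) = ∑ i, a i * b i + 5 := by
  have : ∀ i, (a i - 1) * (b i - 1) = a i * b i - a i - b i + 1 := fun i => by ring
  simp only [this, Finset.sum_add_distrib, Finset.sum_sub_distrib, ha, hb]
  simp
  ring

/-- Two orthogonal sign vectors of length `11` with sum `3`, vanishing exactly at `0` and `i`,
respectively at `0` and `j`, satisfy `a j = b i`. -/
lemma symm_of_orthogonal {a b : Fin 11 → ℤ} {i j : Fin 11} (hi : i ≠ 0) (hj : j ≠ 0) (hij : i ≠ j)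
    (ha : ∀ k, IsSign (a k)) (hb : ∀ k, IsSign (b k))
    (ha0 : ∀ k, a k = 0 ↔ k = 0 ∨ k = i) (hb0 : ∀ k, b k = 0 ↔ k = 0 ∨ k = j)
    (hasum : ∑ k, a k = 3) (hbsum : ∑ k, b k = 3) (hab : ∑ k, a k * b k = 0) : a j = b i := by
  have hdvd : (4 : ℤ) ∣ ∑ k, ((a k - 1) * (b k - 1) - (if k = 0 then 1 else 0)
      - (if k = i then 1 - b i else 0) - (if k = j then 1 - a j else 0)) := by
    refine Finset.dvd_sum fun k _ => ?_
    by_cases h0 : k = 0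
    · subst h0
      simp [(ha0 0).2 (Or.inl rfl), (hb0 0).2 (Or.inl rfl), hi.symm, hj.symm]
    by_cases h1 : k = i
    · subst h1
      simp [(ha0 k).2 (Or.inr rfl), hi, hij]
    by_cases h2 : k = j
    · subst h2
      simp [(hb0 k).2 (Or.inr rfl), hj, hij.symm]
    have hak : a k ≠ 0 := fun h => by simpa [h0, h1] using (ha0 k).1 h
    have hbk : b k ≠ 0 := fun h => by simpa [h0, h2] using (hb0 k).1 h
    rcases ha k with h | h | h <;> rcases hb k with h' | h' | h' <;>
      simp_all
  simp only [Finset.sum_sub_distrib, sum_sub_one_mul_sub_one hasum hbsum, hab,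
    Finset.sum_ite_eq', Finset.mem_univ, if_true] at hdvd
  have haj : a j ≠ 0 := fun h => by simpa [hj, hij.symm] using (ha0 j).1 h
  have hbi : b i ≠ 0 := fun h => by simpa [hi, hij] using (hb0 i).1 h
  rcases ha j with h | h | h <;> rcases hb i with h' | h' | h' <;> omega

/-- Off the column `0`, `σ` is a regular symmetric conference matrix of order `10` bordered by
zeros; the column `0` has sum `3` and is orthogonal to the others. -/
structure IsBorderedConference (σ : Fin 11 → Fin 11 → ℤ) : Prop where
  sign : ∀ i j, j ≠ 0 → IsSign (σ i j)
  eq_zero_iff : ∀ i j, j ≠ 0 → (σ i j = 0 ↔ i = 0 ∨ i = j)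
  symm : ∀ i j, σ i j = σ j i
  sum : ∀ j, ∑ i, σ i j = 3
  orthogonal : ∀ i j, i ≠ j → ∑ k, σ k i * σ k j = 0

/-- If `t` and `τ = σ t / 3` are sign vectors, `t` having exactly two zero entries, then `t`
does not vanish at the border. -/
lemma IsBorderedConference.border_ne_zero {σ : Fin 11 → Fin 11 → ℤ} (hσ : IsBorderedConference σ)
    {t τ : Fin 11 → ℤ} (ht : ∀ k, IsSign (t k)) (hτ : ∀ k, IsSign (τ k))
    (hτsq : ∑ k, τ k * τ k = 9) (hmul : ∀ k, ∑ l, σ l k * t l = 3 * τ k)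
    {i j : Fin 11} (hij : i ≠ j) (hzero : ∀ k, t k = 0 ↔ k = i ∨ k = j) : i ≠ 0 := by
  rintro rfl
  have hτ0 : ∀ k, k ≠ 0 → k ≠ j → τ k = 0 := by
    intro k hk hkj
    have hdvd : (2 : ℤ) ∣ ∑ l, (σ l k * t l - 1 + (if l = 0 then 1 else 0)
        + (if l = j then 1 else 0) + (if l = k then 1 else 0)) := by
      refine Finset.dvd_sum fun l _ => ?_
      by_cases h0 : l = 0
      · subst h0
        simp [(hzero 0).2 (Or.inl rfl), hk.symm, hij]
      by_cases h1 : l = j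
      · subst h1
        simp [(hzero l).2 (Or.inr rfl), h0, hkj.symm]
      by_cases h2 : l = k
      · subst h2
        simp [(hσ.eq_zero_iff l l hk).2 (Or.inr rfl), h0, h1]
      have hak : σ l k ≠ 0 := fun h => by simpa [h0, h2] using (hσ.eq_zero_iff l k hk).1 h
      have hbk : t l ≠ 0 := fun h => by simpa [h0, h1] using (hzero l).1 h
      rcases hσ.sign l k hk with h | h | h <;> rcases ht l with h' | h' | h' <;>
        simp_all
    simp only [Finset.sum_add_distrib, Finset.sum_sub_distrib, hmul,
      Finset.sum_ite_eq', Finset.mem_univ, if_true] at hdvd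
    simp only [Finset.sum_const, Finset.card_univ, Fintype.card_fin] at hdvd
    rcases hτ k with h | h | h
    · exact h
    all_goals rw [h] at hdvd; norm_num at hdvd
  have hle : ∑ k, τ k * τ k ≤ ∑ k, ((if k = 0 then 1 else 0) + if k = j then 1 else 0) := by
    refine Finset.sum_le_sum fun k _ => ?_
    by_cases h0 : k = 0
    · subst h0
      rcases hτ 0 with h | h | h <;> simp [h, hij]
    by_cases h1 : k = j
    · subst h1
      rcases hτ k with h | h | h <;> simp [h, h0]
    simp [hτ0 k h0 h1, h0, h1]
  rw [hτsq] at hle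
  simp [Finset.sum_add_distrib] at hle

/-- If `t` and `τ = σ t / 3` are sign vectors, `t` having exactly two zero entries, then
`⟨t, τ⟩ = 1`. -/
lemma IsBorderedConference.dot_eq_one {σ : Fin 11 → Fin 11 → ℤ} (hσ : IsBorderedConference σ)
    {t τ : Fin 11 → ℤ} (ht : ∀ k, IsSign (t k)) (hτ : ∀ k, IsSign (τ k))
    (htsum : ∑ k, t k = 3) (hτsq : ∑ k, τ k * τ k = 9)
    (hmul : ∀ k, ∑ l, σ l k * t l = 3 * τ k) (hborder : τ 0 = t 0)
    {i j : Fin 11} (hij : i ≠ j) (hzero : ∀ k, t k = 0 ↔ k = i ∨ k = j) :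
    ∑ k, t k * τ k = 1 := by
  have hi : i ≠ 0 := hσ.border_ne_zero ht hτ hτsq hmul hij hzero
  have hj : j ≠ 0 := hσ.border_ne_zero ht hτ hτsq hmul hij.symm fun k => by rw [hzero, or_comm]
  have ht0 : t 0 ≠ 0 := fun h => by simpa [hi.symm, hj.symm] using (hzero 0).1 h
  have hpoint : ∀ k, t k * τ k = (if k = 0 then 1 else 0) + t 0 * (σ k i * σ k j) := by
    intro k
    by_cases hk : k = 0
    · subst hk
      rw [(hσ.eq_zero_iff 0 i hi).2 (Or.inl rfl), hborder]
      rcases ht 0 with h | h | h <;> simp_all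
    by_cases hki : k = i
    · subst hki
      simp [(hzero k).2 (Or.inl rfl), (hσ.eq_zero_iff k k hk).2 (Or.inr rfl), hk]
    by_cases hkj : k = j
    · subst hkj
      simp [(hzero k).2 (Or.inr rfl), (hσ.eq_zero_iff k k hk).2 (Or.inr rfl), hk]
    have hdvd : (4 : ℤ) ∣ ∑ l, ((σ l k - 1) * (t l - 1) - (if l = 0 then 1 - t 0 else 0)
        - (if l = k then 1 - t k else 0) - (if l = i then 1 - σ i k else 0)
        - (if l = j then 1 - σ j k else 0)) := by
      refine Finset.dvd_sum fun l _ => ?_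
      by_cases h0 : l = 0
      · subst h0
        simp [(hσ.eq_zero_iff 0 k hk).2 (Or.inl rfl), Ne.symm hk, hi.symm, hj.symm]
      by_cases h1 : l = k
      · subst h1
        simp [(hσ.eq_zero_iff l l hk).2 (Or.inr rfl), hk, hki, hkj]
      by_cases h2 : l = i
      · subst h2
        simp [(hzero l).2 (Or.inl rfl), h0, h1, hij]
      by_cases h3 : l = j
      · subst h3
        simp [(hzero l).2 (Or.inr rfl), h0, h1, h2]
      have hak : σ l k ≠ 0 := fun h => by simpa [h0, h1] using (hσ.eq_zero_iff l k hk).1 h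
      have hbk : t l ≠ 0 := fun h => by simpa [h2, h3] using (hzero l).1 h
      rcases hσ.sign l k hk with h | h | h <;> rcases ht l with h' | h' | h' <;>
        simp_all
    simp only [Finset.sum_sub_distrib, sum_sub_one_mul_sub_one (hσ.sum k) htsum, hmul,
      Finset.sum_ite_eq', Finset.mem_univ, if_true] at hdvd
    have htk : t k ≠ 0 := fun h => by simpa [hki, hkj] using (hzero k).1 h
    have hσi : σ i k ≠ 0 := fun h => by simpa [hi, Ne.symm hki] using (hσ.eq_zero_iff i k hk).1 h
    have hσj : σ j k ≠ 0 := fun h => by simpa [hj, Ne.symm hkj] using (hσ.eq_zero_iff j k hk).1 h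
    rw [hσ.symm k i, hσ.symm k j, if_neg hk]
    rcases ht 0 with h1 | h1 | h1 <;> rcases ht k with h2 | h2 | h2 <;>
      rcases hτ k with h3 | h3 | h3 <;> rcases hσ.sign i k hk with h4 | h4 | h4 <;>
      rcases hσ.sign j k hk with h5 | h5 | h5 <;>
      first
        | contradiction
        | (revert hdvd; rw [h1, h2, h3, h4, h5]; omega)
  simp only [hpoint, Finset.sum_add_distrib, ← Finset.mul_sum, hσ.orthogonal i j hij,
    Finset.sum_ite_eq', Finset.mem_univ, if_true, mul_zero, add_zero]

end Sign

section Simplex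

variable {x y : Fin 11 → EuclideanSpace ℝ (Fin 10)}

namespace IsRegularSimplex

lemma inner_eq_s13 (hx : IsRegularSimplex x) (i j : Fin 11) :
    ⟪x i, x j⟫ = (if i = j then 11/10 else 0) - 1/10 := by
  split_ifs with h
  · subst h
    rw [real_inner_self_eq_norm_sq, hx.1]
    norm_num
  · rw [hx.2 i j h]
    norm_num

lemma inner_sum_smul_s13 (hx : IsRegularSimplex x) (c : Fin 11 → ℝ) (j : Fin 11) :
    ⟪x j, ∑ i, c i • x i⟫ = 11/10 * c j - 1/10 * ∑ i, c i := by
  simp only [inner_sum, inner_smul_right, hx.inner_eq_s13, mul_sub, Finset.sum_sub_distrib, mul_ite,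
    mul_zero, Finset.sum_ite_eq, Finset.mem_univ, if_true, ← Finset.sum_mul]
  ring

lemma sum_eq_zero (hx : IsRegularSimplex x) : ∑ i, x i = 0 := by
  rw [← inner_self_eq_zero (𝕜 := ℝ)]
  have h : ∀ j, ⟪x j, ∑ i, x i⟫ = 0 := by
    intro j
    have := hx.inner_sum_smul_s13 (fun _ => 1) j
    simp only [one_smul] at this
    rw [this]
    norm_num
  rw [sum_inner]
  simp [h]

lemma span_eq_top_s13 (hx : IsRegularSimplex x) : Submodule.span ℝ (Set.range x) = ⊤ := by
  have hli : LinearIndependent ℝ fun i : Fin 10 => x i.succ := by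
    rw [Fintype.linearIndependent_iff]
    intro g hg
    have hc : ∀ j : Fin 10, 11/10 * g j - 1/10 * ∑ i, g i = 0 := by
      intro j
      have := hx.inner_sum_smul_s13 (Fin.cons 0 g) j.succ
      simp only [Fin.sum_univ_succ (n := 10), Fin.cons_zero, Fin.cons_succ, zero_smul, zero_add,
        hg, inner_zero_right] at this
      exact this.symm
    have hsum : ∑ j, (11/10 * g j - 1/10 * ∑ i, g i) = 0 :=
      Finset.sum_eq_zero fun j _ => hc j
    rw [Finset.sum_sub_distrib, ← Finset.mul_sum] at hsum
    simp only [Finset.sum_const, Finset.card_univ, Fintype.card_fin, nsmul_eq_mul] at hsum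
    intro j
    have := hc j
    push_cast at hsum
    linarith
  have htop := hli.span_eq_top_of_card_eq_finrank (by simp)
  rw [eq_top_iff, ← htop]
  exact Submodule.span_mono (by rintro _ ⟨i, rfl⟩; exact ⟨i.succ, rfl⟩)

lemma ext_inner_s13 (hx : IsRegularSimplex x) {u v : EuclideanSpace ℝ (Fin 10)}
    (h : ∀ i, ⟪x i, u⟫ = ⟪x i, v⟫) : u = v := by
  have hle : Submodule.span ℝ (Set.range x) ≤ (ℝ ∙ (u - v))ᗮ := by
    rw [Submodule.span_le]
    rintro _ ⟨i, rfl⟩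
    rw [SetLike.mem_coe, Submodule.mem_orthogonal_singleton_iff_inner_left, inner_sub_right, h,
      sub_self]
  rw [hx.span_eq_top_s13] at hle
  have hmem : u - v ∈ (ℝ ∙ (u - v))ᗮ := hle trivial
  rw [Submodule.mem_orthogonal_singleton_iff_inner_left, inner_self_eq_zero] at hmem
  exact sub_eq_zero.1 hmem

lemma sum_inner_eq_zero (hx : IsRegularSimplex x) (u : EuclideanSpace ℝ (Fin 10)) :
    ∑ i, ⟪x i, u⟫ = 0 := by
  rw [← sum_inner, hx.sum_eq_zero, inner_zero_left]

/-- A regular simplex is a tight frame. -/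
lemma frame (hx : IsRegularSimplex x) (u : EuclideanSpace ℝ (Fin 10)) :
    ∑ i, (10/11 * ⟪x i, u⟫) • x i = u := by
  refine hx.ext_inner_s13 fun j => ?_
  rw [hx.inner_sum_smul_s13, ← Finset.mul_sum, hx.sum_inner_eq_zero]
  ring

lemma inner_eq_sum (hx : IsRegularSimplex x) (u v : EuclideanSpace ℝ (Fin 10)) :
    ⟪u, v⟫ = 10/11 * ∑ i, ⟪x i, u⟫ * ⟪x i, v⟫ := by
  conv_lhs => rw [← hx.frame u]
  simp only [sum_inner, inner_smul_left, Finset.mul_sum]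
  exact Finset.sum_congr rfl fun i _ => by simp; ring

end IsRegularSimplex

/-- The integer vector `t` is the code of `u` with respect to `x`: inner products are affine
functions of the entries, the admissible angles corresponding to `1`, `0`, `-1`. -/
def HasCode (x : Fin 11 → EuclideanSpace ℝ (Fin 10)) (u : EuclideanSpace ℝ (Fin 10))
    (t : Fin 11 → ℤ) : Prop :=
  ∀ i, ⟪x i, u⟫ = -1/10 + 11/30 * (t i : ℝ)

lemma exists_code {u : EuclideanSpace ℝ (Fin 10)}
    (h : ∀ i, ⟪x i, u⟫ ∈ ({α1, α2, α3} : Set ℝ)) :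
    ∃ t, HasCode x u t ∧ ∀ i, IsSign (t i) := by
  choose t ht ht' using fun i => mem_angles_iff.1 (h i)
  exact ⟨t, ht', ht⟩

lemma HasCode.sum (hx : IsRegularSimplex x) {u : EuclideanSpace ℝ (Fin 10)} {t : Fin 11 → ℤ}
    (ht : HasCode x u t) : ∑ i, t i = 3 := by
  have h := hx.sum_inner_eq_zero u
  simp only [ht _, Finset.sum_add_distrib, ← Finset.mul_sum, Finset.sum_const, Finset.card_univ,
    Fintype.card_fin, nsmul_eq_mul] at h
  have : ((∑ i, t i : ℤ) : ℝ) = 3 := by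
    push_cast at h ⊢
    linarith
  exact_mod_cast this

lemma HasCode.inner (hx : IsRegularSimplex x) {u v : EuclideanSpace ℝ (Fin 10)}
    {t s : Fin 11 → ℤ} (ht : HasCode x u t) (hs : HasCode x v s) :
    ⟪u, v⟫ = -1/10 + 11/90 * ((∑ i, t i * s i : ℤ) : ℝ) := by
  have h1 : (∑ i, (t i : ℝ)) = 3 := by exact_mod_cast ht.sum hx
  have h2 : (∑ i, (s i : ℝ)) = 3 := by exact_mod_cast hs.sum hx
  have key : ∀ i, ⟪x i, u⟫ * ⟪x i, v⟫ = 1/100 - 11/300 * (t i : ℝ) - 11/300 * (s i : ℝ) +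
      121/900 * ((t i : ℝ) * s i) := fun i => by rw [ht i, hs i]; ring
  rw [hx.inner_eq_sum u v]
  simp only [key, Finset.sum_add_distrib, Finset.sum_sub_distrib, ← Finset.mul_sum, h1, h2,
    Finset.sum_const, Finset.card_univ, Fintype.card_fin, nsmul_eq_mul]
  push_cast
  ring

lemma HasCode.dot_eq (hx : IsRegularSimplex x) {u v : EuclideanSpace ℝ (Fin 10)}
    {t s : Fin 11 → ℤ} (ht : HasCode x u t) (hs : HasCode x v s) {n : ℤ}
    (h : ⟪u, v⟫ = -1/10 + 11/30 * (n : ℝ)) : ∑ i, t i * s i = 3 * n := by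
  rw [ht.inner hx hs] at h
  have : ((∑ i, t i * s i : ℤ) : ℝ) = ((3 * n : ℤ) : ℝ) := by
    push_cast at h ⊢
    linarith
  exact_mod_cast this

lemma HasCode.sum_sq (hx : IsRegularSimplex x) {u : EuclideanSpace ℝ (Fin 10)} {t : Fin 11 → ℤ}
    (ht : HasCode x u t) (hu : ‖u‖ = 1) : ∑ i, t i * t i = 9 := by
  have h : ⟪u, u⟫ = -1/10 + 11/30 * ((3 : ℤ) : ℝ) := by
    rw [real_inner_self_eq_norm_sq, hu]; norm_num
  exact (ht.dot_eq hx ht h).trans (by norm_num)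

/-- A unit vector with only admissible angles realizes them six, two and three times. -/
lemma ncard_of_mem_angles (hx : IsRegularSimplex x) {u : EuclideanSpace ℝ (Fin 10)}
    (hu : ‖u‖ = 1) (h : ∀ i, ⟪x i, u⟫ ∈ ({α1, α2, α3} : Set ℝ)) :
    {i | ⟪x i, u⟫ = α1}.ncard = 6 ∧ {i | ⟪x i, u⟫ = α2}.ncard = 2 ∧
      {i | ⟪x i, u⟫ = α3}.ncard = 3 := by
  obtain ⟨t, ht, hs⟩ := exists_code h
  have := ncard_of_sign hs (ht.sum hx) (ht.sum_sq hx hu)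
  simpa only [ht _, code_eq_α1, code_eq_α2, code_eq_α3] using this

lemma α1_ne_α2 : α1 ≠ α2 := by norm_num [α1, α2]

lemma α1_ne_α3 : α1 ≠ α3 := by norm_num [α1, α3]

lemma α2_ne_α3 : α2 ≠ α3 := by norm_num [α2, α3]

lemma mem_angles_of_ncard {S : Set (Fin 11)} {u : EuclideanSpace ℝ (Fin 10)}
    (h : S.ncard ≤ {i | i ∈ S ∧ ⟪x i, u⟫ = α1}.ncard + {i | i ∈ S ∧ ⟪x i, u⟫ = α2}.ncard +
      {i | i ∈ S ∧ ⟪x i, u⟫ = α3}.ncard) {i : Fin 11} (hi : i ∈ S) :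
    ⟪x i, u⟫ ∈ ({α1, α2, α3} : Set ℝ) := by
  have hdisj : ∀ {a b : ℝ}, a ≠ b →
      Disjoint {i | i ∈ S ∧ ⟪x i, u⟫ = a} {i | i ∈ S ∧ ⟪x i, u⟫ = b} := by
    intro a b hab
    rw [Set.disjoint_left]
    rintro k ⟨_, hk⟩ ⟨_, hk'⟩
    exact hab (hk.symm.trans hk')
  have := subset_union_of_ncard_le (fun _ h => h.1) (fun _ h => h.1) (fun _ h => h.1)
    (hdisj α1_ne_α2) (hdisj α1_ne_α3) (hdisj α2_ne_α3) h hi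
  rcases this with (⟨_, h⟩ | ⟨_, h⟩) | ⟨_, h⟩ <;> simp [h]

lemma mem_Yset_iff (hx : IsRegularSimplex x) {C2 : Set (EuclideanSpace ℝ (Fin 10))}
    {u : EuclideanSpace ℝ (Fin 10)} :
    u ∈ Yset x C2 ↔ ‖u‖ = 1 ∧ u ∉ C2 ∧ ∀ i, ⟪x i, u⟫ ∈ ({α1, α2, α3} : Set ℝ) := by
  constructor
  · rintro ⟨hu, hC, h1, h2, h3⟩
    refine ⟨hu, hC, fun i => mem_angles_of_ncard (S := Set.univ) ?_ (Set.mem_univ i)⟩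
    simp only [Set.mem_univ, true_and, h1, h2, h3, Set.ncard_univ, Nat.card_eq_fintype_card,
      Fintype.card_fin]
    norm_num
  · rintro ⟨hu, hC, h⟩
    exact ⟨hu, hC, ncard_of_mem_angles hx hu h⟩

lemma ncard_ne_zero_index : {i : Fin 11 | i ≠ 0}.ncard = 10 := by
  have : {i : Fin 11 | i ≠ 0} = ((Finset.univ.erase 0 : Finset (Fin 11)) : Set (Fin 11)) := by
    ext; simp
  rw [this, Set.ncard_coe_finset]
  simp

lemma mem_angles_of_mem_Y1set {u : EuclideanSpace ℝ (Fin 10)} (hu : u ∈ Y1set x) (i : Fin 11) :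
    ⟪x i, u⟫ ∈ ({α1, α2, α3} : Set ℝ) := by
  obtain ⟨_, h0, h1, h2, h3⟩ := hu
  by_cases hi : i = 0
  · simp [hi, h0]
  refine mem_angles_of_ncard (S := {i | i ≠ 0}) ?_ hi
  simp only [Set.mem_ofPred_eq, h1, h2, h3, ncard_ne_zero_index]
  norm_num

/-- A clique of order `10` can be indexed by the nonzero indices so that, with `x 0`, it forms a
regular simplex whose mixed inner products with `x` equal `α2` exactly at the border and on the
diagonal. -/
lemma exists_enumeration (hx : IsRegularSimplex x) {C2 : Set (EuclideanSpace ℝ (Fin 10))}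
    (hC2 : IsClique10 x C2) :
    ∃ y : Fin 11 → EuclideanSpace ℝ (Fin 10), IsRegularSimplex y ∧ y 0 = x 0 ∧
      (∀ j, j ≠ 0 → y j ∈ C2) ∧ (∀ w ∈ C2, ∃ j, j ≠ 0 ∧ y j = w) ∧
      ∀ i j, j ≠ 0 → (⟪x i, y j⟫ = α2 ↔ i = 0 ∨ i = j) := by
  obtain ⟨hsub, hcard, hadj⟩ := hC2
  have hfin : C2.Finite := Set.finite_of_ncard_ne_zero (by omega)
  obtain ⟨e⟩ : Nonempty (Fin 10 ≃ C2) := by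
    have := hfin.to_subtype
    exact ⟨(Finite.equivFinOfCardEq hcard).symm⟩
  let z : Fin 11 → EuclideanSpace ℝ (Fin 10) := Fin.cons (x 0) fun k => (e k : EuclideanSpace ℝ _)
  have hz : IsRegularSimplex z := by
    constructor
    · intro i
      refine Fin.cases ?_ (fun k => ?_) i
      · simpa [z] using hx.1 0
      · simpa [z] using (hsub (e k).2).1
    · intro i j
      refine Fin.cases ?_ (fun k => ?_) i <;> refine Fin.cases ?_ (fun l => ?_) j
      · simp
      · intro _
        simpa [z, α2] using (hsub (e l).2).2.1
      · intro _
        rw [real_inner_comm]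
        simpa [z, α2] using (hsub (e k).2).2.1
      · intro hkl
        have hne : (e k : EuclideanSpace ℝ (Fin 10)) ≠ e l := fun h =>
          hkl (by rw [e.injective (Subtype.ext h)])
        simpa [z, α2] using hadj _ (e k).2 _ (e l).2 hne
  have hcol : ∀ i, i ≠ 0 → ∃ w ∈ C2, ⟪x i, w⟫ = α2 := by
    intro i hi
    have hz0 : ⟪z 0, x i⟫ = α2 := hx.2 0 i hi.symm
    have h2 := (ncard_of_mem_angles hz (hx.1 i) fun j => by
      refine Fin.cases ?_ (fun k => ?_) j
      · simp [hz0]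
      · rw [real_inner_comm]
        exact mem_angles_of_mem_Y1set (hsub (e k).2) i).2.1
    obtain ⟨j, hj, hj0⟩ := Set.exists_ne_of_one_lt_ncard (by rw [h2]; norm_num) (0 : Fin 11)
    obtain ⟨k, rfl⟩ := Fin.exists_succ_eq.2 hj0
    exact ⟨e k, (e k).2, by rw [real_inner_comm]; exact hj⟩
  have hrow : ∀ w ∈ C2, ∃ i, ∀ k, (k ≠ 0 ∧ ⟪x k, w⟫ = α2) ↔ k = i := by
    intro w hw
    obtain ⟨i, hi⟩ := Set.ncard_eq_one.1 (hsub hw).2.2.2.1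
    exact ⟨i, fun k => Set.ext_iff.1 hi k⟩
  choose! g hg hg' using hcol
  have hgiff : ∀ i j, j ≠ 0 → (⟪x i, g j⟫ = α2 ↔ i = 0 ∨ i = j) := by
    intro i j hj
    by_cases hi : i = 0
    · simp [hi, (hsub (hg j hj)).2.1]
    obtain ⟨k, hk⟩ := hrow _ (hg j hj)
    have hjk := (hk j).1 ⟨hj, hg' j hj⟩
    have hik := hk i
    simp only [hi, ne_eq, not_false_eq_true, true_and, false_or] at hik ⊢
    rw [hik, hjk]
  have hginj : ∀ i j, i ≠ 0 → j ≠ 0 → g i = g j → i = j := by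
    intro i j hi hj hij
    have := (hgiff i j hj).1 (hij ▸ hg' i hi)
    simpa [hi] using this
  have hgsurj : ∀ w ∈ C2, ∃ j, j ≠ 0 ∧ g j = w := by
    have himg : g '' {i | i ≠ 0} = C2 := by
      refine Set.eq_of_subset_of_ncard_le ?_ ?_ hfin
      · rintro _ ⟨i, hi, rfl⟩
        exact hg i hi
      · have hinj : Set.InjOn g {i | i ≠ 0} := fun i hi j hj => hginj i j hi hj
        rw [hinj.ncard_image, hcard, ncard_ne_zero_index]
    intro w hw
    rw [← himg] at hw
    exact hw
  refine ⟨fun j => if j = 0 then x 0 else g j, ⟨?_, ?_⟩, by simp, ?_, ?_, ?_⟩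
  · intro i
    by_cases hi : i = 0
    · simpa [hi] using hx.1 0
    · simpa [hi] using (hsub (hg i hi)).1
  · intro i j hij
    by_cases hi : i = 0
    · have hj : j ≠ 0 := fun h => hij (hi.trans h.symm)
      simpa [hi, hj, α2] using (hsub (hg j hj)).2.1
    by_cases hj : j = 0
    · rw [real_inner_comm]
      simpa [hi, hj, α2] using (hsub (hg i hi)).2.1
    simpa [hi, hj, α2] using hadj _ (hg i hi) _ (hg j hj) fun h => hij (hginj i j hi hj h)
  · intro j hj
    simpa [hj] using hg j hj
  · intro w hw
    obtain ⟨j, hj, rfl⟩ := hgsurj w hw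
    exact ⟨j, hj, by simp [hj]⟩
  · intro i j hj
    simpa [hj] using hgiff i j hj

lemma exists_isBorderedConference (hx : IsRegularSimplex x) (hy : IsRegularSimplex y)
    (h0 : y 0 = x 0) (hangle : ∀ i j, j ≠ 0 → ⟪x i, y j⟫ ∈ ({α1, α2, α3} : Set ℝ))
    (hzero : ∀ i j, j ≠ 0 → (⟪x i, y j⟫ = α2 ↔ i = 0 ∨ i = j)) :
    ∃ σ, IsBorderedConference σ ∧ ∀ j, HasCode x (y j) fun i => σ i j := by
  have hcode : ∀ j, ∃ t, HasCode x (y j) t ∧ (j ≠ 0 → ∀ i, IsSign (t i)) := by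
    intro j
    by_cases hj : j = 0
    · refine ⟨fun i => if i = 0 then 3 else 0, fun i => ?_, fun h => absurd hj h⟩
      rw [hj, h0, hx.inner_eq_s13]
      by_cases hi : i = 0
      · norm_num [hi]
      · norm_num [hi]
    · obtain ⟨t, ht, hs⟩ := exists_code fun i => hangle i j hj
      exact ⟨t, ht, fun _ => hs⟩
  choose σ hσ hsign using hcode
  have hzero' : ∀ i j, j ≠ 0 → (σ j i = 0 ↔ i = 0 ∨ i = j) := by
    intro i j hj
    rw [← hzero i j hj, hσ j i, code_eq_α2]
  have hborder : ∀ i, i ≠ 0 → σ 0 i = 0 := by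
    intro i hi
    rw [← code_inj, ← hσ 0 i, h0, hx.2 i 0 hi]
    norm_num
  have horth : ∀ i j, i ≠ j → ∑ k, σ i k * σ j k = 0 := by
    intro i j hij
    have h : ⟪y i, y j⟫ = -1/10 + 11/30 * ((0 : ℤ) : ℝ) := by
      rw [hy.2 i j hij]; norm_num
    simpa using (hσ i).dot_eq hx (hσ j) h
  refine ⟨fun i j => σ j i, ⟨fun i j hj => hsign j hj i, hzero', fun i j => ?_,
    fun j => (hσ j).sum hx, horth⟩, hσ⟩
  by_cases hij : i = j
  · rw [hij]
  by_cases hi : i = 0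
  · subst hi
    rw [hborder j (Ne.symm hij), (hzero' 0 j (Ne.symm hij)).2 (Or.inl rfl)]
  by_cases hj : j = 0
  · subst hj
    rw [hborder i hi, (hzero' 0 i hi).2 (Or.inl rfl)]
  exact symm_of_orthogonal hj hi (Ne.symm hij) (hsign j hj) (hsign i hi)
    (fun k => hzero' k j hj) (fun k => hzero' k i hi) ((hσ j).sum hx) ((hσ i).sum hx)
    (horth j i (Ne.symm hij))

/-- The linear map sending the simplex `x` to the simplex `y`. -/
def exchange (x y : Fin 11 → EuclideanSpace ℝ (Fin 10)) (u : EuclideanSpace ℝ (Fin 10)) :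
    EuclideanSpace ℝ (Fin 10) :=
  ∑ i, (10/11 * ⟪x i, u⟫) • y i

lemma inner_right_exchange (hx : IsRegularSimplex x) (hy : IsRegularSimplex y) (j : Fin 11)
    (u : EuclideanSpace ℝ (Fin 10)) : ⟪y j, exchange x y u⟫ = ⟪x j, u⟫ := by
  rw [exchange, hy.inner_sum_smul_s13, ← Finset.mul_sum, hx.sum_inner_eq_zero]
  ring

lemma inner_exchange_exchange (hx : IsRegularSimplex x) (hy : IsRegularSimplex y)
    (u v : EuclideanSpace ℝ (Fin 10)) : ⟪exchange x y u, exchange x y v⟫ = ⟪u, v⟫ := by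
  rw [hy.inner_eq_sum, hx.inner_eq_sum u v]
  simp only [inner_right_exchange hx hy]

lemma exchange_left (hx : IsRegularSimplex x) (hy : IsRegularSimplex y) (j : Fin 11) :
    exchange x y (x j) = y j :=
  hy.ext_inner_s13 fun i => by rw [inner_right_exchange hx hy, hx.inner_eq_s13, hy.inner_eq_s13]

lemma exchange_right (hx : IsRegularSimplex x) (hy : IsRegularSimplex y)
    (hxy : ∀ i j, ⟪x i, y j⟫ = ⟪x j, y i⟫) (j : Fin 11) :
    exchange x y (y j) = x j :=
  hy.ext_inner_s13 fun i => by rw [inner_right_exchange hx hy, hxy, real_inner_comm]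

lemma inner_left_exchange (hx : IsRegularSimplex x) (hy : IsRegularSimplex y)
    (hxy : ∀ i j, ⟪x i, y j⟫ = ⟪x j, y i⟫) (j : Fin 11) (u : EuclideanSpace ℝ (Fin 10)) :
    ⟪x j, exchange x y u⟫ = ⟪y j, u⟫ := by
  rw [← exchange_right hx hy hxy j, inner_exchange_exchange hx hy]

lemma exchange_exchange (hx : IsRegularSimplex x) (hy : IsRegularSimplex y)
    (hxy : ∀ i j, ⟪x i, y j⟫ = ⟪x j, y i⟫) (u : EuclideanSpace ℝ (Fin 10)) :
    exchange x y (exchange x y u) = u :=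
  hy.ext_inner_s13 fun i => by rw [inner_right_exchange hx hy, inner_left_exchange hx hy hxy]

lemma exchange_mem_Zset (hx : IsRegularSimplex x) (hy : IsRegularSimplex y)
    (hxy : ∀ i j, ⟪x i, y j⟫ = ⟪x j, y i⟫) {C2 : Set (EuclideanSpace ℝ (Fin 10))}
    (hsurj : ∀ w ∈ C2, ∃ j, j ≠ 0 ∧ y j = w) {u : EuclideanSpace ℝ (Fin 10)}
    (hu : u ∈ Zset x C2) (huy : ∀ k, ⟪y k, u⟫ ∈ ({α1, α2, α3} : Set ℝ)) :
    exchange x y u ∈ Zset x C2 := by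
  obtain ⟨hnorm, _, hux⟩ := (mem_Yset_iff hx).1 hu.1
  refine ⟨(mem_Yset_iff hx).2 ⟨?_, ?_, ?_⟩, ?_⟩
  · rw [← sq_eq_sq₀ (norm_nonneg _) zero_le_one, ← real_inner_self_eq_norm_sq,
      inner_exchange_exchange hx hy, real_inner_self_eq_norm_sq, hnorm]
  · intro hmem
    obtain ⟨j, _, hj⟩ := hsurj _ hmem
    have huj : u = x j := by
      rw [← exchange_exchange hx hy hxy u, ← hj, exchange_right hx hy hxy]
    have := hux j
    rw [huj, hx.inner_eq_s13] at this
    norm_num [α1, α2, α3] at this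
  · intro i
    rw [inner_left_exchange hx hy hxy]
    exact huy i
  · intro w hw
    obtain ⟨j, _, rfl⟩ := hsurj w hw
    rw [real_inner_comm, inner_right_exchange hx hy]
    exact hux j

/-- The exchange of the two simplices moves every vector of `Z` by the same inadmissible angle. -/
lemma inner_exchange_self (hx : IsRegularSimplex x) (hy : IsRegularSimplex y)
    (hxy : ∀ i j, ⟪x i, y j⟫ = ⟪x j, y i⟫) (h0 : y 0 = x 0) {σ : Fin 11 → Fin 11 → ℤ}
    (hσ : IsBorderedConference σ) (hcode : ∀ j, HasCode x (y j) fun i => σ i j)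
    {u : EuclideanSpace ℝ (Fin 10)} (hnorm : ‖u‖ = 1)
    (hux : ∀ k, ⟪x k, u⟫ ∈ ({α1, α2, α3} : Set ℝ))
    (huy : ∀ k, ⟪y k, u⟫ ∈ ({α1, α2, α3} : Set ℝ)) :
    ⟪u, exchange x y u⟫ = 1/45 := by
  obtain ⟨t, ht, hts⟩ := exists_code hux
  obtain ⟨τ, hτ, hτs⟩ := exists_code huy
  have hτ' : HasCode x (exchange x y u) τ := fun i => by
    rw [inner_left_exchange hx hy hxy, hτ i]
  obtain ⟨i, j, hij, hset⟩ :=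
    Set.ncard_eq_two.1 (ncard_of_sign hts (ht.sum hx) (ht.sum_sq hx hnorm)).2.1
  have hborder : τ 0 = t 0 := by rw [← code_inj, ← ht 0, ← hτ 0, h0]
  have hdot := hσ.dot_eq_one hts hτs (ht.sum hx) (hτ.sum_sq hy hnorm)
    (fun k => (hcode k).dot_eq hx ht (hτ k)) hborder hij fun k => Set.ext_iff.1 hset k
  rw [ht.inner hx hτ', hdot]
  norm_num

end Simplex

/-- Given the splitting `Z = Z1 ∪ Z2` of `Z` into two 45-element parts (inner
products within parts in `{α1, α2, α3}`, across parts outside), there is an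
inner-product-preserving bijection from `C1 ∪ C2 ∪ Z1` onto `C1 ∪ C2 ∪ Z2`,
where `C1 = {x 0, …, x 10}`; i.e. the Gram matrices are permutationally
equivalent. -/
theorem gram_equivalent_of_splitting (x : Fin 11 → EuclideanSpace ℝ (Fin 10))
    (hx : IsRegularSimplex x)
    (C2 : Set (EuclideanSpace ℝ (Fin 10))) (hC2 : IsClique10 x C2)
    (Z1 Z2 : Set (EuclideanSpace ℝ (Fin 10)))
    (hunion : Z1 ∪ Z2 = Zset x C2) (hdisj : Disjoint Z1 Z2)
    (hcard1 : Z1.ncard = 45) (hcard2 : Z2.ncard = 45)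
    (hin1 : ∀ u ∈ Z1, ∀ v ∈ Z1, u ≠ v → ⟪u, v⟫ ∈ ({α1, α2, α3} : Set ℝ))
    (hin2 : ∀ u ∈ Z2, ∀ v ∈ Z2, u ≠ v → ⟪u, v⟫ ∈ ({α1, α2, α3} : Set ℝ))
    (hcross : ∀ z1 ∈ Z1, ∀ z2 ∈ Z2, ⟪z1, z2⟫ ∉ ({α1, α2, α3} : Set ℝ)) :
    ∃ f : (Set.range x ∪ C2 ∪ Z1 : Set (EuclideanSpace ℝ (Fin 10))) ≃
          (Set.range x ∪ C2 ∪ Z2 : Set (EuclideanSpace ℝ (Fin 10))),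
      ∀ u v : (Set.range x ∪ C2 ∪ Z1 : Set (EuclideanSpace ℝ (Fin 10))),
        ⟪(f u : EuclideanSpace ℝ (Fin 10)), (f v : EuclideanSpace ℝ (Fin 10))⟫ =
        ⟪(u : EuclideanSpace ℝ (Fin 10)), (v : EuclideanSpace ℝ (Fin 10))⟫ := by
  obtain ⟨y, hy, h0, hyC, hsurj, hzero⟩ := exists_enumeration hx hC2
  have hangle : ∀ i j, j ≠ 0 → ⟪x i, y j⟫ ∈ ({α1, α2, α3} : Set ℝ) := fun i j hj =>
    mem_angles_of_mem_Y1set (hC2.1 (hyC j hj)) i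
  obtain ⟨σ, hσ, hcode⟩ := exists_isBorderedConference hx hy h0 hangle hzero
  have hxy : ∀ i j, ⟪x i, y j⟫ = ⟪x j, y i⟫ := fun i j => by
    rw [hcode j i, hcode i j]
    exact code_inj.2 (hσ.symm i j)
  have huy : ∀ u ∈ Zset x C2, ∀ k, ⟪y k, u⟫ ∈ ({α1, α2, α3} : Set ℝ) := by
    intro u hu k
    by_cases hk : k = 0
    · rw [hk, h0]
      exact ((mem_Yset_iff hx).1 hu.1).2.2 0
    · rw [real_inner_comm]
      exact hu.2 _ (hyC k hk)
  have hself : ∀ u ∈ Zset x C2, ⟪u, exchange x y u⟫ = 1/45 := fun u hu =>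
    have hu' := (mem_Yset_iff hx).1 hu.1
    inner_exchange_self hx hy hxy h0 hσ hcode hu'.1 hu'.2.2 (huy u hu)
  have hleave : ∀ A : Set (EuclideanSpace ℝ (Fin 10)), A ⊆ Zset x C2 →
      (∀ u ∈ A, ∀ v ∈ A, u ≠ v → ⟪u, v⟫ ∈ ({α1, α2, α3} : Set ℝ)) →
      ∀ u ∈ A, exchange x y u ∉ A := by
    intro A hA hin u hu hmem
    have h := hself u (hA hu)
    by_cases heq : u = exchange x y u
    · rw [← heq, real_inner_self_eq_norm_sq, ((mem_Yset_iff hx).1 (hA hu).1).1] at h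
      norm_num at h
    · have := hin u hu _ hmem heq
      rw [h] at this
      norm_num [α1, α2, α3] at this
  have hZ1 : Z1 ⊆ Zset x C2 := hunion ▸ Set.subset_union_left
  have hZ2 : Z2 ⊆ Zset x C2 := hunion ▸ Set.subset_union_right
  have h12 : ∀ u ∈ Z1, exchange x y u ∈ Z2 := fun u hu => by
    have hmem := exchange_mem_Zset hx hy hxy hsurj (hZ1 hu) (huy u (hZ1 hu))
    rw [← hunion] at hmem
    exact hmem.resolve_left (hleave Z1 hZ1 hin1 u hu)
  have h21 : ∀ u ∈ Z2, exchange x y u ∈ Z1 := fun u hu => by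
    have hmem := exchange_mem_Zset hx hy hxy hsurj (hZ2 hu) (huy u (hZ2 hu))
    rw [← hunion] at hmem
    exact hmem.resolve_right (hleave Z2 hZ2 hin2 u hu)
  have hmaps : ∀ A B : Set (EuclideanSpace ℝ (Fin 10)), (∀ u ∈ A, exchange x y u ∈ B) →
      ∀ u ∈ Set.range x ∪ C2 ∪ A, exchange x y u ∈ Set.range x ∪ C2 ∪ B := by
    rintro A B hAB u ((⟨i, rfl⟩ | hu) | hu)
    · rw [exchange_left hx hy]
      by_cases hi : i = 0
      · exact Or.inl (Or.inl ⟨0, by rw [hi, h0]⟩)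
      · exact Or.inl (Or.inr (hyC i hi))
    · obtain ⟨j, _, rfl⟩ := hsurj u hu
      exact Or.inl (Or.inl ⟨j, (exchange_right hx hy hxy j).symm⟩)
    · exact Or.inr (hAB u hu)
  refine ⟨⟨fun u => ⟨exchange x y u, hmaps Z1 Z2 h12 u u.2⟩,
    fun u => ⟨exchange x y u, hmaps Z2 Z1 h21 u u.2⟩,
    fun u => Subtype.ext (exchange_exchange hx hy hxy u),
    fun u => Subtype.ext (exchange_exchange hx hy hxy u)⟩, fun u v => ?_⟩
  exact inner_exchange_exchange hx hy u v
end
end
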